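/- arXiv:1503.04701 — 4 statements merged into one kernel-verified Lean document; each statement's English description precedes it below -/
import Mathlib

section
/- Let n be a positive integer, let P be a real symmetric positive semidefinite n×n matrix, let J be a real symmetric positive definite n×n matrix, and let N be any real n×n matrix. If for all vectors u, ξ ∈ ℝⁿ one has (uᵀ N ξ)² ≤ (uᵀ P u)(ξᵀ J ξ), then P − N J⁻¹ Nᵀ is positive semidefinite (i.e. P ⪰ N J⁻¹ Nᵀ in the Loewner order). -/
open Matrix

/-!
Test the inequality against the vector `ξ = J⁻¹ Nᴴ u`, which maximises `|u* N ξ|² / (ξ* J ξ)` when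
`J` is positive definite. Then `u* N ξ` and `ξ* J ξ` are both equal to `q = u* N J⁻¹ Nᴴ u`, so with
`p = u* P u ≥ 0` the inequality reads `q² ≤ p q`, whence `q ≤ p`.
-/

theorem le_of_sq_le_mul_self {R : Type*} [MonoidWithZero R] [LinearOrder R] [MulPosStrictMono R]
    {p q : R} (hp : 0 ≤ p) (h : q ^ 2 ≤ p * q) : q ≤ p := by
  contrapose! h
  rw [sq]
  exact mul_lt_mul_of_pos_right h (hp.trans_lt h)

theorem star_conjTranspose_mulVec_dotProduct {m n R : Type*} [Fintype m] [Fintype n]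
    [NonUnitalSemiring R] [StarRing R] (N : Matrix m n R) (u : m → R) (v : n → R) :
    star (Nᴴ *ᵥ u) ⬝ᵥ v = star u ⬝ᵥ N *ᵥ v := by
  rw [star_mulVec, conjTranspose_conjTranspose, dotProduct_mulVec]

theorem star_inv_mulVec_dotProduct_mulVec_inv_mulVec {n R : Type*} [Fintype n] [DecidableEq n]
    [CommRing R] [StarRing R] {J : Matrix n n R} (hJ : J.IsHermitian) (hJu : IsUnit J)
    (v : n → R) : star (J⁻¹ *ᵥ v) ⬝ᵥ J *ᵥ (J⁻¹ *ᵥ v) = star v ⬝ᵥ J⁻¹ *ᵥ v := by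
  have hdet : IsUnit J.det := (isUnit_iff_isUnit_det J).1 hJu
  rw [mulVec_mulVec, mul_nonsing_inv J hdet, one_mulVec, star_mulVec, hJ.inv.eq, dotProduct_mulVec]

section Loewner

open scoped ComplexOrder

variable {m n 𝕜 : Type*} [Fintype m] [Fintype n] [RCLike 𝕜]

theorem posSemidef_sub_of_re_dotProduct_mulVec_le {A B : Matrix m m 𝕜} (hA : A.IsHermitian)
    (hB : B.IsHermitian)
    (h : ∀ u : m → 𝕜, RCLike.re (star u ⬝ᵥ B *ᵥ u) ≤ RCLike.re (star u ⬝ᵥ A *ᵥ u)) :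
    (A - B).PosSemidef := by
  have hAB : (A - B).IsHermitian := hA.sub hB
  refine .of_dotProduct_mulVec_nonneg hAB fun u ↦ RCLike.nonneg_iff.2
    ⟨?_, hAB.im_star_dotProduct_mulVec_self u⟩
  rw [sub_mulVec, dotProduct_sub, map_sub]
  exact sub_nonneg.2 (h u)

theorem cauchy_schwarz_matrix_bound_general [DecidableEq n] {P : Matrix m m 𝕜} {J : Matrix n n 𝕜}
    {N : Matrix m n 𝕜} (hP : P.PosSemidef) (hJ : J.IsHermitian) (hJu : IsUnit J)
    (h : ∀ (u : m → 𝕜) (ξ : n → 𝕜), ‖star u ⬝ᵥ N *ᵥ ξ‖ ^ 2 ≤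
      RCLike.re (star u ⬝ᵥ P *ᵥ u) * RCLike.re (star ξ ⬝ᵥ J *ᵥ ξ)) :
    (P - N * J⁻¹ * Nᴴ).PosSemidef := by
  refine posSemidef_sub_of_re_dotProduct_mulVec_le hP.isHermitian
    (isHermitian_mul_mul_conjTranspose N hJ.inv) fun u ↦ ?_
  set ξ := J⁻¹ *ᵥ (Nᴴ *ᵥ u) with hξ
  have hN : star u ⬝ᵥ (N * J⁻¹ * Nᴴ) *ᵥ u = star u ⬝ᵥ N *ᵥ ξ := by
    simp only [hξ, mulVec_mulVec, Matrix.mul_assoc]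
  have hJξ : star ξ ⬝ᵥ J *ᵥ ξ = star u ⬝ᵥ N *ᵥ ξ := by
    rw [star_inv_mulVec_dotProduct_mulVec_inv_mulVec hJ hJu, star_conjTranspose_mulVec_dotProduct]
  rw [hN]
  refine le_of_sq_le_mul_self (hP.re_dotProduct_nonneg u) ?_
  calc RCLike.re (star u ⬝ᵥ N *ᵥ ξ) ^ 2
      ≤ ‖star u ⬝ᵥ N *ᵥ ξ‖ ^ 2 := sq_le_sq.2 ((RCLike.abs_re_le_norm _).trans (le_abs_self _))
    _ ≤ RCLike.re (star u ⬝ᵥ P *ᵥ u) * RCLike.re (star ξ ⬝ᵥ J *ᵥ ξ) := h u ξ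
    _ = RCLike.re (star u ⬝ᵥ P *ᵥ u) * RCLike.re (star u ⬝ᵥ N *ᵥ ξ) := by rw [hJξ]

end Loewner

/-- If `P ⪰ 0` is symmetric PSD, `J` is symmetric positive definite, and for all
vectors `u, ξ` one has `(uᵀ N ξ)² ≤ (uᵀ P u)(ξᵀ J ξ)`, then `P − N J⁻¹ Nᵀ ⪰ 0`. -/
theorem cauchy_schwarz_matrix_bound (n : ℕ) (hn : 0 < n)
    (P J N : Matrix (Fin n) (Fin n) ℝ)
    (hP : P.PosSemidef) (hJ : J.PosDef)
    (h : ∀ u ξ : Fin n → ℝ, (u ⬝ᵥ N *ᵥ ξ) ^ 2 ≤ (u ⬝ᵥ P *ᵥ u) * (ξ ⬝ᵥ J *ᵥ ξ)) :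
    (P - N * J⁻¹ * Nᵀ).PosSemidef := by
  rw [← conjTranspose_eq_transpose_of_trivial N]
  exact cauchy_schwarz_matrix_bound_general hP hJ.isHermitian hJ.isUnit (by simpa using h)
end

section
/- Let ω : ℝ → ℝ³ be any function and let R, R̂ : ℝ → M₃(ℝ) be differentiable functions both satisfying the same kinematic equation: R'(t) = R(t) (ω(t))ₓ and R̂'(t) = R̂(t) (ω(t))ₓ for all t. Then the right-invariant error t ↦ R̂(t) R(t)ᵀ is constant on ℝ. -/
open Matrix

attribute [local instance] Matrix.frobeniusNormedAddCommGroup Matrix.frobeniusNormedSpace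

/-- The cross-product (hat) matrix of `a ∈ ℝ³`: `(a)ₓ u = a × u` for all `u`. -/
noncomputable def hat (a : Fin 3 → ℝ) : Matrix (Fin 3) (Fin 3) ℝ :=
  !![0, -a 2, a 1; a 2, 0, -a 0; -a 1, a 0, 0]

section MatrixDerivatives

variable {𝕜 𝔸 l m n : Type*} [NontriviallyNormedField 𝕜]

theorem hasDerivAt_matrix_iff [NormedAddCommGroup 𝔸] [NormedSpace 𝕜 𝔸] [Finite n]
    {M : 𝕜 → Matrix m n 𝔸} {M' : Matrix m n 𝔸} {t : 𝕜} :
    HasDerivAt M M' t ↔ ∀ i j, HasDerivAt (fun s ↦ M s i j) (M' i j) t := by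
  -- `HasDerivAt` only sees the topology of the matrix space, which is the product topology
  -- whatever norm is chosen.
  classical
  have := Fintype.ofFinite n
  exact hasDerivAt_pi.trans (forall_congr' fun _ ↦ hasDerivAt_pi)

theorem hasDerivAt_matrix_transpose [NormedAddCommGroup 𝔸] [NormedSpace 𝕜 𝔸] [Finite m] [Finite n]
    {M : 𝕜 → Matrix m n 𝔸} {M' : Matrix m n 𝔸} {t : 𝕜} (hM : HasDerivAt M M' t) :
    HasDerivAt (fun s ↦ (M s)ᵀ) M'ᵀ t :=
  hasDerivAt_matrix_iff.2 fun i j ↦ hasDerivAt_matrix_iff.1 hM j i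

theorem hasDerivAt_matrix_mul [NormedRing 𝔸] [NormedAlgebra 𝕜 𝔸] [Fintype m] [Finite n]
    {M : 𝕜 → Matrix l m 𝔸} {M' : Matrix l m 𝔸} {N : 𝕜 → Matrix m n 𝔸} {N' : Matrix m n 𝔸} {t : 𝕜}
    (hM : HasDerivAt M M' t) (hN : HasDerivAt N N' t) :
    HasDerivAt (fun s ↦ M s * N s) (M' * N t + M t * N') t := by
  refine hasDerivAt_matrix_iff.2 fun i j ↦ ?_
  simp only [Matrix.mul_apply, Matrix.add_apply, ← Finset.sum_add_distrib]
  exact HasDerivAt.fun_sum fun k _ ↦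
    (hasDerivAt_matrix_iff.1 hM i k).fun_mul (hasDerivAt_matrix_iff.1 hN k j)

end MatrixDerivatives

section ConservedProducts

variable {𝕜 𝔸 l m n : Type*} [RCLike 𝕜]

theorem matrix_eq_of_hasDerivAt_zero [NormedAddCommGroup 𝔸] [NormedSpace 𝕜 𝔸] [Finite n]
    {M : 𝕜 → Matrix m n 𝔸} (hM : ∀ t, HasDerivAt M 0 t) (s t : 𝕜) : M s = M t := by
  ext i j
  have hentry (r : 𝕜) : HasDerivAt (fun r ↦ M r i j) 0 r := hasDerivAt_matrix_iff.1 (hM r) i j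
  exact is_const_of_deriv_eq_zero (fun r ↦ (hentry r).differentiableAt)
    (fun r ↦ (hentry r).deriv) s t

theorem matrix_mul_eq_of_hasDerivAt [NormedRing 𝔸] [NormedAlgebra 𝕜 𝔸] [Fintype m] [Finite n]
    {A : 𝕜 → Matrix m m 𝔸} {M : 𝕜 → Matrix l m 𝔸} {N : 𝕜 → Matrix m n 𝔸}
    (hM : ∀ t, HasDerivAt M (M t * A t) t) (hN : ∀ t, HasDerivAt N (-A t * N t) t) (s t : 𝕜) :
    M s * N s = M t * N t := by
  refine matrix_eq_of_hasDerivAt_zero (M := fun r ↦ M r * N r) (fun r ↦ ?_) s t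
  have hcancel : M r * A r * N r + M r * (-A r * N r) = 0 := by
    rw [Matrix.neg_mul, Matrix.mul_neg, Matrix.mul_assoc, add_neg_cancel]
  simpa only [hcancel] using hasDerivAt_matrix_mul (hM r) (hN r)

theorem right_invariant_error_constant_general [NormedCommRing 𝔸] [NormedAlgebra 𝕜 𝔸]
    [Finite m] [Fintype n] {A : 𝕜 → Matrix n n 𝔸} (hA : ∀ t, (A t)ᵀ = -A t)
    {R : 𝕜 → Matrix m n 𝔸} {Rhat : 𝕜 → Matrix l n 𝔸}
    (hR : ∀ t, HasDerivAt R (R t * A t) t) (hRhat : ∀ t, HasDerivAt Rhat (Rhat t * A t) t)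
    (s t : 𝕜) : Rhat s * (R s)ᵀ = Rhat t * (R t)ᵀ := by
  have hRT (r : 𝕜) : HasDerivAt (fun r ↦ (R r)ᵀ) (-A r * (R r)ᵀ) r := by
    simpa only [transpose_mul, hA] using hasDerivAt_matrix_transpose (hR r)
  exact matrix_mul_eq_of_hasDerivAt hRhat hRT s t

end ConservedProducts

theorem hat_transpose (a : Fin 3 → ℝ) : (hat a)ᵀ = -hat a := by
  ext i j
  fin_cases i <;> fin_cases j <;> simp [hat]

/-- If `R` and `R̂` both satisfy the same kinematic equation `M' = M (ω(t))ₓ`,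
then the right-invariant error `t ↦ R̂(t) R(t)ᵀ` is constant. -/
theorem right_invariant_error_constant (ω : ℝ → Fin 3 → ℝ)
    (R Rhat : ℝ → Matrix (Fin 3) (Fin 3) ℝ)
    (hR : ∀ t, HasDerivAt R (R t * hat (ω t)) t)
    (hRhat : ∀ t, HasDerivAt Rhat (Rhat t * hat (ω t)) t) :
    ∀ s t : ℝ, Rhat s * (R s)ᵀ = Rhat t * (R t)ᵀ :=
  right_invariant_error_constant_general (fun t ↦ hat_transpose (ω t)) hR hRhat
end

section
/- Let P be a real symmetric positive definite n×n matrix, N a real symmetric positive definite m×m matrix, and H a real m×n matrix. Define the Kalman gain K = P Hᵀ (H P Hᵀ + N)⁻¹. Then the matrix (I − K H) P is invertible and ((I − K H) P)⁻¹ = P⁻¹ + Hᵀ N⁻¹ H. -/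
/-!
Clearing the inverse from the definition of the gain gives `K * (H * P * G + N) = P * G`, where `G`
stands for `Hᵀ`. This rearranges to `(1 - K * H) * P * G = K * N`. Hence left multiplication by the
updated covariance `(1 - K * H) * P` takes `P⁻¹` to `1 - K * H` and `G * N⁻¹ * H` to `K * H`, and
these two products add up to `1`.
-/

open Matrix

section GainEquation

variable {m n R : Type*} [Fintype m] [Fintype n] [DecidableEq n]

theorem one_sub_mul_mul_mul_eq_of_mul_add_eq [Ring R]
    {P : Matrix n n R} {N : Matrix m m R} {H : Matrix m n R} {G K : Matrix n m R}
    (hK : K * (H * P * G + N) = P * G) :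
    (1 - K * H) * P * G = K * N := by
  calc
    (1 - K * H) * P * G = P * G - K * (H * P * G) := by
      simp only [Matrix.sub_mul, Matrix.one_mul, Matrix.mul_assoc]
    _ = K * N := by rw [← hK, Matrix.mul_add, add_sub_cancel_left]

theorem kalman_information_form_general [DecidableEq m] [CommRing R]
    {P : Matrix n n R} (hP : IsUnit P) {N : Matrix m m R} (hN : IsUnit N)
    {H : Matrix m n R} {G K : Matrix n m R} (hK : K * (H * P * G + N) = P * G) :
    IsUnit ((1 - K * H) * P) ∧ ((1 - K * H) * P)⁻¹ = P⁻¹ + G * N⁻¹ * H := by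
  rw [isUnit_iff_isUnit_det] at hP hN
  have hprior : (1 - K * H) * P * P⁻¹ = 1 - K * H := mul_nonsing_inv_cancel_right _ _ hP
  have hobservation : (1 - K * H) * P * (G * N⁻¹ * H) = K * H := by
    rw [← Matrix.mul_assoc, ← Matrix.mul_assoc, one_sub_mul_mul_mul_eq_of_mul_add_eq hK,
      mul_nonsing_inv_cancel_right _ _ hN]
  have hinv : (1 - K * H) * P * (P⁻¹ + G * N⁻¹ * H) = 1 := by
    rw [Matrix.mul_add, hprior, hobservation, sub_add_cancel]
  exact ⟨.of_mul_eq_one _ hinv, inv_eq_right_inv hinv⟩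

end GainEquation

theorem posDef_mul_mul_conjTranspose_add {m n R : Type*} [Finite m] [Fintype n]
    [Ring R] [PartialOrder R] [StarRing R] [AddLeftMono R]
    {P : Matrix n n R} (hP : P.PosSemidef) {N : Matrix m m R} (hN : N.PosDef)
    (H : Matrix m n R) : (H * P * Hᴴ + N).PosDef := by
  have := Fintype.ofFinite m
  exact hN.posSemidef_add (hP.mul_mul_conjTranspose_same H)

/-- Information form of the Kalman covariance update: with
`K = P Hᵀ (H P Hᵀ + N)⁻¹` (`P`, `N` symmetric positive definite), the matrix `(I − K H) P` is
invertible with inverse `P⁻¹ + Hᵀ N⁻¹ H`. -/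
theorem kalman_information_form (n m : ℕ)
    (P : Matrix (Fin n) (Fin n) ℝ) (hP : P.PosDef)
    (N : Matrix (Fin m) (Fin m) ℝ) (hN : N.PosDef)
    (H : Matrix (Fin m) (Fin n) ℝ)
    (K : Matrix (Fin n) (Fin m) ℝ) (hK : K = P * Hᵀ * (H * P * Hᵀ + N)⁻¹) :
    IsUnit ((1 - K * H) * P) ∧ ((1 - K * H) * P)⁻¹ = P⁻¹ + Hᵀ * N⁻¹ * H := by
  have hS : IsUnit (H * P * Hᵀ + N) := (posDef_mul_mul_conjTranspose_add hP.posSemidef hN H).isUnit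
  have hgain : K * (H * P * Hᵀ + N) = P * Hᵀ := by
    rw [hK, nonsing_inv_mul_cancel_right _ _ ((isUnit_iff_isUnit_det _).1 hS)]
  exact kalman_information_form_general hP.isUnit hN.isUnit hgain
end

section
/- Let m, n ≥ 1, and for each k ≥ 1 let Hₖ be a real m×n matrix and Nₖ a real symmetric positive definite m×m matrix; set Aₖ = Hₖᵀ Nₖ⁻¹ Hₖ and assume A₁ is positive definite. Define a sequence of n×n matrices by P₁ = A₁⁻¹ and, for k ≥ 1, Pₖ₊₁ = (I − Kₖ₊₁ Hₖ₊₁) Pₖ where Kₖ₊₁ = Pₖ Hₖ₊₁ᵀ (Hₖ₊₁ Pₖ Hₖ₊₁ᵀ + Nₖ₊₁)⁻¹. Then for every k ≥ 1, Pₖ is symmetric positive definite and Pₖ = (Σⱼ₌₁ᵏ Aⱼ)⁻¹. In particular, in the attitude filtering problem where at time t_k the stacked observation matrix is Hₖ = [Hₖ⁰; Hₖ¹] with Hₖ⁰ = (dₖ⁰)ₓ, Hₖ¹ = (dₖ¹)ₓ and Nₖ = diag((σₖ⁰)² I₃, (σₖ¹)² I₃), the covariance returned by the Invariant EKF after n updates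 is Pₙ = ( Σₖ₌₁ⁿ [ (1/(σₖ⁰)²) Hₖ⁰ᵀ Hₖ⁰ + (1/(σₖ¹)²) Hₖ¹ᵀ Hₖ¹ ] )⁻¹, which equals the inverse of the intrinsic Fisher information matrix Jₙ of the filtering problem. -/
open Matrix Finset

/-- The IEKF covariance recursion (indices shifted so that `iekfP H N 0` is the covariance `P₁`
after the first measurement): `P₁ = (H₁ᵀ N₁⁻¹ H₁)⁻¹` and
`Pₖ₊₁ = (I − Kₖ₊₁ Hₖ₊₁) Pₖ` with `Kₖ₊₁ = Pₖ Hₖ₊₁ᵀ (Hₖ₊₁ Pₖ Hₖ₊₁ᵀ + Nₖ₊₁)⁻¹`. -/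
noncomputable def iekfP {m n : Type*} [Fintype m] [Fintype n] [DecidableEq m] [DecidableEq n]
    (H : ℕ → Matrix m n ℝ) (N : ℕ → Matrix m m ℝ) : ℕ → Matrix n n ℝ
  | 0 => ((H 0)ᵀ * (N 0)⁻¹ * H 0)⁻¹
  | (k + 1) =>
      (1 - iekfP H N k * (H (k + 1))ᵀ *
          (H (k + 1) * iekfP H N k * (H (k + 1))ᵀ + N (k + 1))⁻¹ * H (k + 1)) * iekfP H N k

/-!
In terms of the information `P⁻¹` the filter is additive: by the Woodbury identity, the covariance
update `(1 - K H) P` with the Kalman gain `K` is the inverse of `P⁻¹ + Hᵀ N⁻¹ H`. By induction the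
inverse covariance is the sum of the informations of the measurements received so far. Stacking two
measurements with uncorrelated noises makes `N` block diagonal, so their informations add as well.
-/

section Information

variable {m n R : Type*} [Fintype m] [DecidableEq m] [CommRing R]

/-- The information `Hᵀ N⁻¹ H` carried by a measurement with observation matrix `H` and noise
covariance `N` (the matrix `Aₖ` of the theorem). Meaningful only for invertible `N`. -/
noncomputable def informationMatrix (H : Matrix m n R) (N : Matrix m m R) : Matrix n n R :=
  Hᵀ * N⁻¹ * H

/-- The Fisher information `Jₖ₊₁` accumulated by the measurements `0, …, k`. The index is shifted
as in `iekfP`, so that `fisherInformation H N 0` is the information of the first measurement. -/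
noncomputable def fisherInformation (H : ℕ → Matrix m n R) (N : ℕ → Matrix m m R) (k : ℕ) :
    Matrix n n R :=
  ∑ j ∈ range (k + 1), informationMatrix (H j) (N j)

theorem fisherInformation_zero (H : ℕ → Matrix m n R) (N : ℕ → Matrix m m R) :
    fisherInformation H N 0 = informationMatrix (H 0) (N 0) :=
  sum_range_one _

theorem fisherInformation_succ (H : ℕ → Matrix m n R) (N : ℕ → Matrix m m R) (k : ℕ) :
    fisherInformation H N (k + 1) =
      fisherInformation H N k + informationMatrix (H (k + 1)) (N (k + 1)) :=
  sum_range_succ _ _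

variable [Finite n] [PartialOrder R] [StarRing R] [TrivialStar R]

theorem posSemidef_informationMatrix (H : Matrix m n R) {N : Matrix m m R} (hN : N.PosSemidef) :
    (informationMatrix H N).PosSemidef := by
  simpa only [informationMatrix, conjTranspose_eq_transpose_of_trivial] using
    hN.inv.conjTranspose_mul_mul_same H

theorem posDef_fisherInformation [AddLeftMono R] {H : ℕ → Matrix m n R} {N : ℕ → Matrix m m R}
    (hN : ∀ k, (N k).PosSemidef) (h0 : (informationMatrix (H 0) (N 0)).PosDef) (k : ℕ) :
    (fisherInformation H N k).PosDef := by
  induction k with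
  | zero => rwa [fisherInformation_zero]
  | succ k ih =>
    rw [fisherInformation_succ]
    exact ih.add_posSemidef (posSemidef_informationMatrix _ (hN _))

end Information

section Update

variable {m n R : Type*} [Fintype m] [Fintype n] [DecidableEq m] [DecidableEq n]

/-- The Kalman covariance update `(1 - K H) P` with gain `K = P Hᵀ (H P Hᵀ + N)⁻¹`, for the prior
covariance `P`, the observation matrix `H` and the noise covariance `N`. -/
noncomputable def kalmanUpdate [CommRing R] (P : Matrix n n R) (H : Matrix m n R)
    (N : Matrix m m R) : Matrix n n R :=
  (1 - P * Hᵀ * (H * P * Hᵀ + N)⁻¹ * H) * P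

theorem kalmanUpdate_inv_eq_inv_add [CommRing R] {J : Matrix n n R} {H : Matrix m n R}
    {N : Matrix m m R} (hJ : IsUnit J) (hN : IsUnit N) (hHN : IsUnit (H * J⁻¹ * Hᵀ + N)) :
    kalmanUpdate J⁻¹ H N = (J + informationMatrix H N)⁻¹ := by
  have hNinv : N⁻¹⁻¹ = N := nonsing_inv_nonsing_inv N ((isUnit_iff_isUnit_det N).1 hN)
  have woodbury : (J + informationMatrix H N)⁻¹ =
      J⁻¹ - J⁻¹ * Hᵀ * (N⁻¹⁻¹ + H * J⁻¹ * Hᵀ)⁻¹ * H * J⁻¹ :=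
    add_mul_mul_inv_eq_sub J Hᵀ N⁻¹ H hJ (isUnit_nonsing_inv_iff.2 hN)
      (by rwa [hNinv, add_comm])
  rw [woodbury, hNinv, add_comm N, kalmanUpdate, Matrix.sub_mul, Matrix.one_mul]

theorem kalmanUpdate_inv_eq_inv_add_of_posDef {K : Type*} [Field K] [PartialOrder K]
    [StarRing K] [TrivialStar K] [AddLeftMono K] {J : Matrix n n K} {N : Matrix m m K}
    (H : Matrix m n K) (hJ : J.PosDef) (hN : N.PosDef) :
    kalmanUpdate J⁻¹ H N = (J + informationMatrix H N)⁻¹ := by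
  have hH : (H * J⁻¹ * Hᵀ).PosSemidef := by
    simpa only [conjTranspose_eq_transpose_of_trivial] using
      hJ.inv.posSemidef.mul_mul_conjTranspose_same H
  exact kalmanUpdate_inv_eq_inv_add hJ.isUnit hN.isUnit (hN.posSemidef_add hH).isUnit

end Update

section StackedMeasurements

theorem posDef_fromBlocks_zero {m₁ m₂ R : Type*} [Finite m₁] [Finite m₂] [Ring R]
    [PartialOrder R] [StarRing R] [AddLeftMono R] {A : Matrix m₁ m₁ R} {D : Matrix m₂ m₂ R}
    (hA : A.PosDef) (hD : D.PosDef) : (fromBlocks A 0 0 D).PosDef := by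
  cases nonempty_fintype m₁
  cases nonempty_fintype m₂
  refine .of_dotProduct_mulVec_pos
    (hA.isHermitian.fromBlocks (conjTranspose_zero ..) hD.isHermitian) fun x hx => ?_
  obtain ⟨u, v, rfl⟩ : ∃ u v, x = Sum.elim u v := ⟨_, _, (Sum.elim_comp_inl_inr x).symm⟩
  have hsplit : star (Sum.elim u v) ⬝ᵥ fromBlocks A 0 0 D *ᵥ Sum.elim u v =
      star u ⬝ᵥ A *ᵥ u + star v ⬝ᵥ D *ᵥ v := by
    simp [fromBlocks_mulVec, Function.star_sumElim]
  rw [hsplit]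
  by_cases hu : u = 0
  · have hv : v ≠ 0 := by
      rintro rfl
      exact hx (by simp [hu])
    exact add_pos_of_nonneg_of_pos (hA.posSemidef.dotProduct_mulVec_nonneg u)
      (hD.dotProduct_mulVec_pos hv)
  · exact add_pos_of_pos_of_nonneg (hA.dotProduct_mulVec_pos hu)
      (hD.posSemidef.dotProduct_mulVec_nonneg v)

variable {m₁ m₂ n : Type*} [Fintype m₁] [Fintype m₂] [DecidableEq m₁] [DecidableEq m₂]

theorem informationMatrix_fromRows_fromBlocks {R : Type*} [CommRing R]
    (H₁ : Matrix m₁ n R) (H₂ : Matrix m₂ n R) {N₁ : Matrix m₁ m₁ R} {N₂ : Matrix m₂ m₂ R}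
    (hN : IsUnit N₁ ↔ IsUnit N₂) :
    informationMatrix (fromRows H₁ H₂) (fromBlocks N₁ 0 0 N₂) =
      informationMatrix H₁ N₁ + informationMatrix H₂ N₂ := by
  simp only [informationMatrix, inv_fromBlocks_zero₂₁_of_isUnit_iff _ _ _ hN, transpose_fromRows,
    fromCols_mul_fromBlocks, fromCols_mul_fromRows, Matrix.mul_zero, Matrix.zero_mul, neg_zero,
    add_zero, zero_add]

theorem informationMatrix_smul_one {K : Type*} [Field K] (H : Matrix m₁ n K) {c : K}
    (hc : c ≠ 0) : informationMatrix H (c • 1) = c⁻¹ • (Hᵀ * H) := by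
  have hinv : (c • (1 : Matrix m₁ m₁ K))⁻¹ = c⁻¹ • 1 :=
    inv_eq_right_inv (by simp [smul_smul, hc])
  simp only [informationMatrix, hinv, Matrix.mul_smul, Matrix.mul_one, Matrix.smul_mul]

theorem informationMatrix_fromRows_fromBlocks_smul_one {K : Type*} [Field K]
    (H₁ : Matrix m₁ n K) (H₂ : Matrix m₂ n K) {c₁ c₂ : K} (hc₁ : c₁ ≠ 0) (hc₂ : c₂ ≠ 0) :
    informationMatrix (fromRows H₁ H₂) (fromBlocks (c₁ • 1) 0 0 (c₂ • 1)) =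
      c₁⁻¹ • (H₁ᵀ * H₁) + c₂⁻¹ • (H₂ᵀ * H₂) := by
  have hunit : IsUnit (c₁ • (1 : Matrix m₁ m₁ K)) ↔ IsUnit (c₂ • (1 : Matrix m₂ m₂ K)) :=
    iff_of_true (isUnit_one.smul (Units.mk0 c₁ hc₁)) (isUnit_one.smul (Units.mk0 c₂ hc₂))
  rw [informationMatrix_fromRows_fromBlocks _ _ hunit, informationMatrix_smul_one _ hc₁,
    informationMatrix_smul_one _ hc₂]

end StackedMeasurements

section Filter

variable {m n : Type*} [Fintype m] [Fintype n] [DecidableEq m] [DecidableEq n]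
  {H : ℕ → Matrix m n ℝ} {N : ℕ → Matrix m m ℝ}

theorem iekfP_zero : iekfP H N 0 = (informationMatrix (H 0) (N 0))⁻¹ :=
  rfl

theorem iekfP_succ (k : ℕ) :
    iekfP H N (k + 1) = kalmanUpdate (iekfP H N k) (H (k + 1)) (N (k + 1)) :=
  rfl

theorem iekfP_eq_inv_fisherInformation (hN : ∀ k, (N k).PosDef)
    (h0 : (informationMatrix (H 0) (N 0)).PosDef) (k : ℕ) :
    iekfP H N k = (fisherInformation H N k)⁻¹ := by
  induction k with
  | zero => rw [iekfP_zero, fisherInformation_zero]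
  | succ k ih =>
    have hJ : (fisherInformation H N k).PosDef :=
      posDef_fisherInformation (fun j => (hN j).posSemidef) h0 k
    rw [iekfP_succ, ih, kalmanUpdate_inv_eq_inv_add_of_posDef _ hJ (hN _), fisherInformation_succ]

theorem posDef_iekfP (hN : ∀ k, (N k).PosDef) (h0 : (informationMatrix (H 0) (N 0)).PosDef)
    (k : ℕ) : (iekfP H N k).PosDef := by
  rw [iekfP_eq_inv_fisherInformation hN h0]
  exact (posDef_fisherInformation (fun j => (hN j).posSemidef) h0 k).inv

end Filter

universe u v

theorem iekf_covariance_is_inverse_fisher_general :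
    (∀ (m : Type u) (n : Type v) [Fintype m] [Fintype n] [DecidableEq m] [DecidableEq n]
      (H : ℕ → Matrix m n ℝ) (N : ℕ → Matrix m m ℝ),
        (∀ k, (N k).PosDef) → (informationMatrix (H 0) (N 0)).PosDef →
        ∀ k, (iekfP H N k).PosDef ∧ iekfP H N k = (fisherInformation H N k)⁻¹) ∧
    (∀ (m₁ m₂ : Type u) (n : Type v) [Fintype m₁] [Fintype m₂] [Fintype n]
      [DecidableEq m₁] [DecidableEq m₂] [DecidableEq n]
      (H₁ : ℕ → Matrix m₁ n ℝ) (H₂ : ℕ → Matrix m₂ n ℝ) (σ₁ σ₂ : ℕ → ℝ),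
        (∀ k, σ₁ k ≠ 0) → (∀ k, σ₂ k ≠ 0) →
      ∀ (H : ℕ → Matrix (m₁ ⊕ m₂) n ℝ) (N : ℕ → Matrix (m₁ ⊕ m₂) (m₁ ⊕ m₂) ℝ),
        (∀ k, H k = fromRows (H₁ k) (H₂ k)) →
        (∀ k, N k = fromBlocks ((σ₁ k ^ 2) • 1) 0 0 ((σ₂ k ^ 2) • 1)) →
        (informationMatrix (H 0) (N 0)).PosDef →
        ∀ k, iekfP H N k = (∑ j ∈ range (k + 1),
          ((1 / σ₁ j ^ 2) • ((H₁ j)ᵀ * H₁ j) + (1 / σ₂ j ^ 2) • ((H₂ j)ᵀ * H₂ j)))⁻¹) := by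
  refine ⟨fun _ _ _ _ _ _ _ _ hN h0 k =>
    ⟨posDef_iekfP hN h0 k, iekfP_eq_inv_fisherInformation hN h0 k⟩, ?_⟩
  intro m₁ m₂ n _ _ _ _ _ _ H₁ H₂ σ₁ σ₂ hσ₁ hσ₂ H N hH hN h0 k
  have hNpos (j : ℕ) : (N j).PosDef := by
    rw [hN]
    exact posDef_fromBlocks_zero (PosDef.one.smul (sq_pos_of_ne_zero (hσ₁ j)))
      (PosDef.one.smul (sq_pos_of_ne_zero (hσ₂ j)))
  have hinfo (j : ℕ) : informationMatrix (H j) (N j) =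
      (1 / σ₁ j ^ 2) • ((H₁ j)ᵀ * H₁ j) + (1 / σ₂ j ^ 2) • ((H₂ j)ᵀ * H₂ j) := by
    rw [hH, hN, informationMatrix_fromRows_fromBlocks_smul_one _ _ (pow_ne_zero 2 (hσ₁ j))
      (pow_ne_zero 2 (hσ₂ j)), one_div, one_div]
  rw [iekfP_eq_inv_fisherInformation hNpos h0, fisherInformation, sum_congr rfl fun j _ => hinfo j]

/-- (general part) the IEKF covariance recursion with `Aₖ = Hₖᵀ Nₖ⁻¹ Hₖ`
(`Nₖ` positive definite, `A₁` positive definite) yields symmetric positive definite matrices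
`Pₖ = (Σⱼ₌₁ᵏ Aⱼ)⁻¹`; (particular part) for the attitude filtering problem with stacked
observation matrices `Hₖ = [(dₖ⁰)ₓ; (dₖ¹)ₓ]` and noise covariance
`Nₖ = diag((σₖ⁰)² I₃, (σₖ¹)² I₃)`, the IEKF covariance after `n` updates is
`Pₙ = (Σₖ [(1/(σₖ⁰)²) Hₖ⁰ᵀ Hₖ⁰ + (1/(σₖ¹)²) Hₖ¹ᵀ Hₖ¹])⁻¹`, the inverse of the intrinsic
Fisher information matrix. -/
theorem iekf_covariance_is_inverse_fisher :
    (∀ (m n : ℕ), 1 ≤ m → 1 ≤ n →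
      ∀ (H : ℕ → Matrix (Fin m) (Fin n) ℝ) (N : ℕ → Matrix (Fin m) (Fin m) ℝ),
        (∀ k, (N k).PosDef) → ((H 0)ᵀ * (N 0)⁻¹ * H 0).PosDef →
        ∀ k, (iekfP H N k).PosDef ∧
          iekfP H N k = (∑ j ∈ Finset.range (k + 1), (H j)ᵀ * (N j)⁻¹ * H j)⁻¹) ∧
    (∀ (d0 d1 : ℕ → Fin 3 → ℝ) (σ0 σ1 : ℕ → ℝ), (∀ k, 0 < σ0 k) → (∀ k, 0 < σ1 k) →
      ∀ (H : ℕ → Matrix (Fin 3 ⊕ Fin 3) (Fin 3) ℝ)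
        (N : ℕ → Matrix (Fin 3 ⊕ Fin 3) (Fin 3 ⊕ Fin 3) ℝ),
        (∀ k, H k = Matrix.fromRows (hat (d0 k)) (hat (d1 k))) →
        (∀ k, N k = Matrix.fromBlocks ((σ0 k ^ 2) • (1 : Matrix (Fin 3) (Fin 3) ℝ)) 0 0
          ((σ1 k ^ 2) • (1 : Matrix (Fin 3) (Fin 3) ℝ))) →
        ((H 0)ᵀ * (N 0)⁻¹ * H 0).PosDef →
        ∀ n, iekfP H N n =
          (∑ k ∈ Finset.range (n + 1),
            ((1 / σ0 k ^ 2) • ((hat (d0 k))ᵀ * hat (d0 k)) +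
              (1 / σ1 k ^ 2) • ((hat (d1 k))ᵀ * hat (d1 k))))⁻¹) :=
  ⟨fun m n _ _ => iekf_covariance_is_inverse_fisher_general.1 (Fin m) (Fin n),
    fun d0 d1 σ0 σ1 h0 h1 => iekf_covariance_is_inverse_fisher_general.2 (Fin 3) (Fin 3) (Fin 3)
      (fun k => hat (d0 k)) (fun k => hat (d1 k)) σ0 σ1 (fun k => (h0 k).ne') fun k => (h1 k).ne'⟩
end
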